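/- Let G be a graph on m vertices with eigenvalues μ₁,…,μ_m (the roots of f_G, listed with multiplicity), and let H = K_{p,q} be the complete bipartite graph on p + q vertices with p, q ≥ 1. Then, as an identity of polynomials in ℂ[λ], f_{G∘H}(λ) = λ^{m(p+q−2)} · ∏_{i=1}^{m} (λ³ − μ_iλ² − (p + q + pq)λ + pq(μ_i − 2)). In particular 0 is an eigenvalue of G∘H with multiplicity at least m(p+q−2), and for each eigenvalue μ of G, every root of x³ − μx² − (p+q+pq)x + pq(μ−2) is an eigenvalue of G∘H. -/

import Mathlib

open Matrix Polynomial

/-- The characteristic matrix `λ I - B` of `B`, over the field `ℂ(λ)` of rational functions. -/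
noncomputable def charMatRatFunc {V : Type*} [Fintype V] [DecidableEq V]
    (B : Matrix V V ℂ) : Matrix V V (RatFunc ℂ) :=
  Matrix.scalar V (RatFunc.X : RatFunc ℂ) - B.map (algebraMap ℂ (RatFunc ℂ))

/-- The coronal of a matrix `B`: the sum of the entries of `(λ I - B)⁻¹` over `ℂ(λ)`. -/
noncomputable def coronal {V : Type*} [Fintype V] [DecidableEq V]
    (B : Matrix V V ℂ) : RatFunc ℂ :=
  ∑ i, ∑ j, (charMatRatFunc B)⁻¹ i j

/-- The adjacency matrix of the corona `G ∘ H`. -/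
def coronaMatrix {α β : Type*} (A : Matrix α α ℂ) (B : Matrix β β ℂ)
    [DecidableEq α] :
    Matrix (α ⊕ β × α) (α ⊕ β × α) ℂ :=
  Matrix.fromBlocks A
    (Matrix.of fun i p => if i = p.2 then 1 else 0)
    (Matrix.of fun p j => if p.2 = j then 1 else 0)
    (Matrix.of fun p q => if p.2 = q.2 then B p.1 q.1 else 0)


/-- The adjacency matrix of the complete bipartite graph `K_{p,q}`:
the block matrix `[[0_{p,p}, 1_{p,q}], [1_{q,p}, 0_{q,q}]]`. -/
def completeBipartiteMatrix (p q : ℕ) : Matrix (Fin p ⊕ Fin q) (Fin p ⊕ Fin q) ℂ :=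
  Matrix.fromBlocks 0 (Matrix.of fun _ _ => 1) (Matrix.of fun _ _ => 1) 0

/-!
Over the field `ℂ(λ)` the block `(λI - B) ⊗ I` of `λI - A∘B` is invertible, and its Schur complement
is `(λ - χ_B(λ))I - A`, where `χ_B` is the coronal of `B`. Hence
`f_{A∘B}(λ) = f_B(λ)^m · f_A(λ - χ_B(λ))` for all square matrices `A` (of size `m`) and `B`.
For `K_{p,q}`, solving `(λI - B) w = 1` with `w` constant on each part gives
`χ_B = ((p + q)λ + 2pq) / (λ² - pq)`, and since `B` factors through the two-dimensional space of
vectors constant on each part, `f_B = λ^{p+q-2}(λ² - pq)`; the factors `λ² - pq` of `f_B^m` clear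
the denominators.
-/

open scoped Kronecker

lemma aeval_charpoly_eq_det {n R S : Type*} [Fintype n] [DecidableEq n] [CommRing R] [CommRing S]
    [Algebra R S] (A : Matrix n n R) (y : S) :
    aeval y A.charpoly = (Matrix.scalar n y - A.map (algebraMap R S)).det := by
  rw [← Matrix.eval_charpoly, Matrix.charpoly_map, Polynomial.eval_map_algebraMap]

lemma ratFunc_X_pow_sub_C_ne_zero {K : Type*} [Field K] {n : ℕ} (hn : 0 < n) (a : K) :
    RatFunc.X ^ n - RatFunc.C a ≠ 0 := by
  simpa using RatFunc.algebraMap_ne_zero (X_pow_sub_C_ne_zero hn a)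

lemma sq_sub_mul_sub_div_sub {K : Type*} [Field K] {x t : K} (hxt : x ^ 2 - t ≠ 0) (s a : K) :
    (x ^ 2 - t) * (x - (s * x + 2 * t) / (x ^ 2 - t) - a) =
      x ^ 3 - a * x ^ 2 - (s + t) * x + t * (a - 2) := by
  field_simp
  ring

section CopyIncidence

variable (α β R : Type*) [DecidableEq α]

/-- The matrix `1ᵀ ⊗ I` joining each vertex `i : α` of the base graph to all the vertices `(b, i)`
of its own copy of a graph on `β`, with entries in `R`. -/
def copyIncidence [Zero R] [One R] : Matrix α (β × α) R :=
  Matrix.of fun i c => if i = c.2 then 1 else 0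

variable {α β R}

lemma copyIncidence_mul_kronecker_one_mul_transpose [Fintype α] [Fintype β] [Semiring R]
    (M : Matrix β β R) :
    copyIncidence α β R * (M ⊗ₖ (1 : Matrix α α R)) * (copyIncidence α β R)ᵀ =
      Matrix.scalar α (∑ b, ∑ c, M b c) := by
  ext i j
  rw [Matrix.scalar_apply, Matrix.diagonal_apply, Finset.sum_comm (f := fun b c => M b c)]
  simp [copyIncidence, Matrix.mul_apply, Matrix.one_apply, Fintype.sum_prod_type]

end CopyIncidence

section Coronal

variable {α β : Type*} [Fintype α] [DecidableEq α] [Fintype β] [DecidableEq β]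

lemma charMatRatFunc_eq_map_charmatrix (B : Matrix β β ℂ) :
    charMatRatFunc B = B.charmatrix.map (algebraMap ℂ[X] (RatFunc ℂ)) := by
  ext i j
  by_cases hij : i = j <;> simp [charMatRatFunc, hij, RatFunc.algebraMap_eq_C]

lemma det_charMatRatFunc (B : Matrix β β ℂ) :
    (charMatRatFunc B).det = algebraMap ℂ[X] (RatFunc ℂ) B.charpoly := by
  rw [charMatRatFunc_eq_map_charmatrix, Matrix.charpoly, RingHom.map_det, RingHom.mapMatrix_apply]

lemma isUnit_det_charMatRatFunc (B : Matrix β β ℂ) : IsUnit (charMatRatFunc B).det := by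
  rw [det_charMatRatFunc, isUnit_iff_ne_zero]
  exact RatFunc.algebraMap_ne_zero B.charpoly_monic.ne_zero

lemma coronal_eq_sum_of_mulVec_eq_one {B : Matrix β β ℂ} {w : β → RatFunc ℂ}
    (hw : charMatRatFunc B *ᵥ w = 1) : coronal B = ∑ b, w b := by
  have inv_mulVec_one : (charMatRatFunc B)⁻¹ *ᵥ 1 = w := by
    rw [← hw, Matrix.mulVec_mulVec, Matrix.nonsing_inv_mul _ (isUnit_det_charMatRatFunc B),
      Matrix.one_mulVec]
  simp only [coronal, ← inv_mulVec_one, Matrix.mulVec, dotProduct_one]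

lemma charMatRatFunc_coronaMatrix (A : Matrix α α ℂ) (B : Matrix β β ℂ) :
    charMatRatFunc (coronaMatrix A B) =
      Matrix.fromBlocks (charMatRatFunc A) (-copyIncidence α β (RatFunc ℂ))
        (-(copyIncidence α β (RatFunc ℂ))ᵀ) (charMatRatFunc B ⊗ₖ 1) := by
  ext (i | ⟨b, i⟩) (j | ⟨c, j⟩)
  · simp [charMatRatFunc, coronaMatrix, Matrix.diagonal_apply]
  · simp [charMatRatFunc, coronaMatrix, copyIncidence, apply_ite]
  · simp [charMatRatFunc, coronaMatrix, copyIncidence, apply_ite, eq_comm]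
  · by_cases hbc : b = c <;> by_cases hij : i = j <;>
      simp [charMatRatFunc, coronaMatrix, hbc, hij]

theorem algebraMap_charpoly_coronaMatrix (A : Matrix α α ℂ) (B : Matrix β β ℂ) :
    algebraMap ℂ[X] (RatFunc ℂ) (coronaMatrix A B).charpoly =
      algebraMap ℂ[X] (RatFunc ℂ) B.charpoly ^ Fintype.card α *
        aeval (RatFunc.X - coronal B) A.charpoly := by
  set D := charMatRatFunc B ⊗ₖ (1 : Matrix α α (RatFunc ℂ)) with hD
  have det_D : D.det = algebraMap ℂ[X] (RatFunc ℂ) B.charpoly ^ Fintype.card α := by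
    rw [Matrix.det_kronecker, Matrix.det_one, one_pow, mul_one, det_charMatRatFunc]
  have isUnit_det_D : IsUnit D.det := by
    rw [det_D, ← det_charMatRatFunc]
    exact (isUnit_det_charMatRatFunc B).pow _
  let : Invertible D := D.invertibleOfIsUnitDet isUnit_det_D
  have schur_complement : charMatRatFunc A -
      -copyIncidence α β (RatFunc ℂ) * ⅟D * -(copyIncidence α β (RatFunc ℂ))ᵀ =
        Matrix.scalar α (RatFunc.X - coronal B) - A.map (algebraMap ℂ (RatFunc ℂ)) := by
    rw [Matrix.invOf_eq_nonsing_inv, hD, Matrix.inv_kronecker, inv_one, Matrix.mul_neg,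
      Matrix.neg_mul, Matrix.neg_mul, neg_neg, copyIncidence_mul_kronecker_one_mul_transpose,
      charMatRatFunc, coronal, map_sub, sub_right_comm]
  rw [← det_charMatRatFunc, charMatRatFunc_coronaMatrix, Matrix.det_fromBlocks₂₂, det_D,
    schur_complement, aeval_charpoly_eq_det]

end Coronal

section CompleteBipartite

variable (p q : ℕ)

lemma coronal_completeBipartiteMatrix :
    coronal (completeBipartiteMatrix p q) =
      ((p + q) * (RatFunc.X : RatFunc ℂ) + 2 * p * q) / ((RatFunc.X : RatFunc ℂ) ^ 2 - p * q) := by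
  have denom_ne_zero : (RatFunc.X : RatFunc ℂ) ^ 2 - p * q ≠ 0 := by
    simpa using ratFunc_X_pow_sub_C_ne_zero two_pos ((p : ℂ) * q)
  set x : RatFunc ℂ := RatFunc.X with hx
  let w : Fin p ⊕ Fin q → RatFunc ℂ :=
    Sum.elim (fun _ => (x + q) / (x ^ 2 - p * q)) (fun _ => (x + p) / (x ^ 2 - p * q))
  have row_inl : x * ((x + q) / (x ^ 2 - p * q)) - q * ((x + p) / (x ^ 2 - p * q)) = 1 := by
    linear_combination mul_inv_cancel₀ denom_ne_zero
  have row_inr : x * ((x + p) / (x ^ 2 - p * q)) - p * ((x + q) / (x ^ 2 - p * q)) = 1 := by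
    linear_combination mul_inv_cancel₀ denom_ne_zero
  have hw : charMatRatFunc (completeBipartiteMatrix p q) *ᵥ w = 1 := by
    ext (a | b)
    · simpa [w, ← hx, charMatRatFunc, completeBipartiteMatrix, Matrix.mulVec, dotProduct,
        Matrix.diagonal_apply, ← sub_eq_add_neg] using row_inl
    · simpa [w, ← hx, charMatRatFunc, completeBipartiteMatrix, Matrix.mulVec, dotProduct,
        Matrix.diagonal_apply, neg_add_eq_sub] using row_inr
  calc coronal (completeBipartiteMatrix p q)
      = ∑ v, w v := coronal_eq_sum_of_mulVec_eq_one hw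
    _ = p * ((x + q) / (x ^ 2 - p * q)) + q * ((x + p) / (x ^ 2 - p * q)) := by simp [w]
    _ = ((p + q) * x + 2 * p * q) / (x ^ 2 - p * q) := by ring

lemma charpoly_completeBipartiteMatrix (hpq : 2 ≤ p + q) :
    (completeBipartiteMatrix p q).charpoly = X ^ (p + q - 2) * (X ^ 2 - C ((p : ℂ) * q)) := by
  let U : Matrix (Fin p ⊕ Fin q) (Fin 2) ℂ :=
    Matrix.of (Sum.elim (fun _ => ![1, 0]) (fun _ => ![0, 1]))
  let V : Matrix (Fin 2) (Fin p ⊕ Fin q) ℂ := Matrix.of ![Sum.elim 0 1, Sum.elim 1 0]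
  have factorization : completeBipartiteMatrix p q = U * V := by
    ext (a | b) (c | d) <;> simp [completeBipartiteMatrix, U, V, Matrix.mul_apply]
  have quotient_matrix : V * U = !![0, (q : ℂ); (p : ℂ), 0] := by
    ext i j
    fin_cases i <;> fin_cases j <;> simp [U, V, Matrix.mul_apply]
  rw [factorization, Matrix.charpoly_mul_comm_of_le U V (by simpa using hpq), quotient_matrix,
    Matrix.charpoly_fin_two]
  simp [Matrix.trace_fin_two, Matrix.det_fin_two, sub_eq_add_neg, mul_comm (q : ℂ[X])]

end CompleteBipartite

section CoronaCompleteBipartite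

variable {α : Type*} [Fintype α] [DecidableEq α]

theorem charpoly_coronaMatrix_completeBipartiteMatrix {p q : ℕ} (hpq : 2 ≤ p + q)
    {A : Matrix α α ℂ} {μ : α → ℂ} (hμ : A.charpoly = ∏ i, (X - C (μ i))) :
    (coronaMatrix A (completeBipartiteMatrix p q)).charpoly =
      X ^ (Fintype.card α * (p + q - 2)) *
        ∏ i, (X ^ 3 - C (μ i) * X ^ 2 - C ((p : ℂ) + q + p * q) * X +
          C ((p : ℂ) * q * (μ i - 2))) := by
  have denom_ne_zero : (RatFunc.X : RatFunc ℂ) ^ 2 - p * q ≠ 0 := by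
    simpa using ratFunc_X_pow_sub_C_ne_zero two_pos ((p : ℂ) * q)
  have C_two : RatFunc.C (2 : ℂ) = 2 := map_ofNat _ 2
  let φ := algebraMap ℂ[X] (RatFunc ℂ)
  have cubic_factor (i : α) :
      φ (X ^ 2 - C ((p : ℂ) * q)) *
          aeval (RatFunc.X - coronal (completeBipartiteMatrix p q)) (X - C (μ i)) =
        φ (X ^ 3 - C (μ i) * X ^ 2 - C ((p : ℂ) + q + p * q) * X +
          C ((p : ℂ) * q * (μ i - 2))) := by
    rw [coronal_completeBipartiteMatrix]
    simpa [φ, C_two, mul_assoc] using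
      sq_sub_mul_sub_div_sub denom_ne_zero ((p : RatFunc ℂ) + q) (RatFunc.C (μ i))
  apply RatFunc.algebraMap_injective ℂ
  rw [algebraMap_charpoly_coronaMatrix, charpoly_completeBipartiteMatrix p q hpq, hμ, map_mul φ,
    map_mul φ, map_pow φ, map_pow φ, map_prod φ, map_prod,
    ← Finset.prod_congr rfl fun i _ => cubic_factor i, Finset.prod_mul_distrib, Finset.prod_const,
    Finset.card_univ, mul_pow, pow_mul', mul_assoc]

theorem corona_completeBipartite_spectrum_general (p q : ℕ) (hpq : 2 ≤ p + q)
    (A : Matrix α α ℂ) (μ : α → ℂ) (hμ : A.charpoly = ∏ i, (X - C (μ i))) :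
    (coronaMatrix A (completeBipartiteMatrix p q)).charpoly =
      X ^ (Fintype.card α * (p + q - 2)) *
        ∏ i, (X ^ 3 - C (μ i) * X ^ 2 - C ((p : ℂ) + q + p * q) * X +
          C ((p : ℂ) * q * (μ i - 2))) ∧
    X ^ (Fintype.card α * (p + q - 2)) ∣
      (coronaMatrix A (completeBipartiteMatrix p q)).charpoly ∧
    ∀ i : α, ∀ x : ℂ,
      x ^ 3 - μ i * x ^ 2 - ((p : ℂ) + q + p * q) * x + (p : ℂ) * q * (μ i - 2) = 0 →
      (coronaMatrix A (completeBipartiteMatrix p q)).charpoly.eval x = 0 := by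
  have h := charpoly_coronaMatrix_completeBipartiteMatrix hpq hμ
  refine ⟨h, h ▸ dvd_mul_right _ _, fun i x hx => ?_⟩
  rw [h, eval_mul, eval_prod]
  refine mul_eq_zero_of_right _ (Finset.prod_eq_zero (Finset.mem_univ i) ?_)
  simpa using hx

end CoronaCompleteBipartite

/-- For `G` with eigenvalues `μ₁, …, μ_m` and `H = K_{p,q}` (`p, q ≥ 1`):
`f_{G∘H}(λ) = λ^{m(p+q-2)} ⬝ ∏ᵢ (λ³ - μᵢλ² - (p+q+pq)λ + pq(μᵢ-2))`.  In particular `0` is an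
eigenvalue of `G ∘ H` of multiplicity at least `m(p+q-2)`, and every root of one of the cubics
is an eigenvalue of `G ∘ H`. -/
theorem corona_completeBipartite_spectrum {m : ℕ} (p q : ℕ) (hp : 1 ≤ p) (hq : 1 ≤ q)
    (G : SimpleGraph (Fin m)) [DecidableRel G.Adj] (μ : Fin m → ℂ)
    (hμ : (G.adjMatrix ℂ).charpoly = ∏ i, (Polynomial.X - Polynomial.C (μ i))) :
    (coronaMatrix (G.adjMatrix ℂ) (completeBipartiteMatrix p q)).charpoly =
      Polynomial.X ^ (m * (p + q - 2)) *
        ∏ i, (Polynomial.X ^ 3 - Polynomial.C (μ i) * Polynomial.X ^ 2 -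
          Polynomial.C ((p : ℂ) + q + p * q) * Polynomial.X +
          Polynomial.C ((p : ℂ) * q * (μ i - 2))) ∧
    Polynomial.X ^ (m * (p + q - 2)) ∣
      (coronaMatrix (G.adjMatrix ℂ) (completeBipartiteMatrix p q)).charpoly ∧
    ∀ i : Fin m, ∀ x : ℂ,
      x ^ 3 - μ i * x ^ 2 - ((p : ℂ) + q + p * q) * x + (p : ℂ) * q * (μ i - 2) = 0 →
      (coronaMatrix (G.adjMatrix ℂ) (completeBipartiteMatrix p q)).charpoly.eval x = 0 := by
  simpa only [Fintype.card_fin] using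
    corona_completeBipartite_spectrum_general p q (by lia) (G.adjMatrix ℂ) μ hμ
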